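/- Let μ ≤_cd ν be finite Borel measures on ℝ with finite first moments. Then for every x ∈ ℝ one has μ|_{(−∞,x]} ≤_pcd ν, and there exists a unique finite Borel measure P on ℝ² whose first marginal is μ and which satisfies P((−∞,x] × A) = S^ν(μ|_{(−∞,x]})(A) for every x ∈ ℝ and every Borel set A ⊆ ℝ. Moreover this measure P is a supermartingale coupling, P ∈ S(μ,ν). (This P is called the Increasing Supermartingale Transport.) -/

import Mathlib

/-!
Write `p_μ t = ∫ (t - s)⁺ dμ(s)` for the put function of `μ` (`put`). Put functions of measures with
finite first moment are convex and vanish at `-∞`; conversely a convex function vanishing at `-∞` is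
the put function of the Stieltjes measure of its right derivative (`exists_measure_lput`), and a
measure is determined by its put function. For measures of equal mass, `μ ≤_cd ν` amounts to
`p_μ ≤ p_ν` (`cdOrder_of_put_le`).

Shadows. The key fact about convex functions is `sub_hull_convex`: if `f` and `h` are convex and `c`
is the convex hull of `f - h`, then `f - c` is convex. With `f = p_ν`, `h = p_μ`, both `c` and
`p_ν - c` are then put functions, so `ν = θ + ρ` with `p_ρ = c`. Any competitor `θ'` has a remainder
`ν - θ'` whose put function is convex and below `p_ν - p_μ`, hence below `c`; so `θ` is the shadow
(`exists_shadow`). Taking hulls is associative: the remainder of the shadow of `μ + η` in `ν` has as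
put function the hull of `p_ρ - p_η`, where `ρ` is the remainder of the shadow of `μ`. Thus the shadow
of `μ + η` exceeds that of `μ` by a measure `κ` with `η ≤_cd κ` (`shadow_increment`).

Existence. Applied to `μ` restricted to `(-∞, x]`, this gives an increasing family `θ x ≤ ν`, the
increment over `(x, y]` having mass `μ (x, y]`. Its densities with respect to `ν` are distribution
functions in `x`, and quantile coupling produces a joint law `P` with
`P ((-∞, x] × A) = θ x A` (`exists_joint_law`).

Uniqueness holds because the rectangles `(-∞, x] × A` determine a finite measure. For the
supermartingale property, `μ` restricted to `(a, b]` is `≤_cd` the second marginal of `P` restricted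
to `(a, b] × ℝ`, so `P` has nonpositive drift on strips over half-open intervals; since domination of
finite measures on these intervals implies domination on Borel sets (`measure_le_of_Ioc_le`), the
drift is nonpositive on every strip (`supermartingale_of_strips`).
-/

open MeasureTheory Set
open scoped ENNReal

noncomputable section

/-- A finite Borel measure on ℝ with finite first moment. -/
def FiniteFirstMoment (μ : Measure ℝ) : Prop :=
  IsFiniteMeasure μ ∧ Integrable (fun x : ℝ => x) μ

/-- Linear growth of a real function. -/
def LinearGrowth (φ : ℝ → ℝ) : Prop :=
  ∃ C : ℝ, ∀ x : ℝ, |φ x| ≤ C * (1 + |x|)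

/-- Convex-decreasing (second stochastic) order `μ ≤_cd ν`. -/
def CDOrder (μ ν : Measure ℝ) : Prop :=
  ∀ φ : ℝ → ℝ, ConvexOn ℝ Set.univ φ → Antitone φ → LinearGrowth φ →
    ∫ x, φ x ∂μ ≤ ∫ x, φ x ∂ν

/-- Positive-convex-decreasing order `μ ≤_pcd ν`. -/
def PCDOrder (μ ν : Measure ℝ) : Prop :=
  ∀ φ : ℝ → ℝ, ConvexOn ℝ Set.univ φ → Antitone φ → (∀ x : ℝ, 0 ≤ φ x) →
    LinearGrowth φ → ∫ x, φ x ∂μ ≤ ∫ x, φ x ∂ν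

/-- Convex order `μ ≤_c ν`. -/
def COrder (μ ν : Measure ℝ) : Prop :=
  ∀ φ : ℝ → ℝ, ConvexOn ℝ Set.univ φ → LinearGrowth φ →
    ∫ x, φ x ∂μ ≤ ∫ x, φ x ∂ν

/-- `P` is a coupling of `μ` and `ν`. -/
def IsCoupling (P : Measure (ℝ × ℝ)) (μ ν : Measure ℝ) : Prop :=
  P.map Prod.fst = μ ∧ P.map Prod.snd = ν

/-- The supermartingale property of a measure on `ℝ × ℝ`. -/
def SupermartingaleProperty (P : Measure (ℝ × ℝ)) : Prop :=
  ∀ A : Set ℝ, MeasurableSet A →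
    ∫ p in A ×ˢ (Set.univ : Set ℝ), p.2 ∂P ≤ ∫ p in A ×ˢ (Set.univ : Set ℝ), p.1 ∂P

/-- `P ∈ S(μ,ν)`: supermartingale coupling. -/
def IsSupermartingaleCoupling (P : Measure (ℝ × ℝ)) (μ ν : Measure ℝ) : Prop :=
  IsCoupling P μ ν ∧ SupermartingaleProperty P

/-- `P|_{M×ℝ}` is a martingale. -/
def MartingaleOn (P : Measure (ℝ × ℝ)) (M : Set ℝ) : Prop :=
  ∀ A : Set ℝ, MeasurableSet A → A ⊆ M →
    ∫ p in A ×ˢ (Set.univ : Set ℝ), p.2 ∂P = ∫ p in A ×ˢ (Set.univ : Set ℝ), p.1 ∂P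

/-- `P ∈ M(μ,ν)`: martingale coupling. -/
def IsMartingaleCoupling (P : Measure (ℝ × ℝ)) (μ ν : Measure ℝ) : Prop :=
  IsCoupling P μ ν ∧ MartingaleOn P Set.univ

/-- `θ` is the shadow `S^ν(μ)` of `μ` in `ν`. -/
def IsShadow (μ ν θ : Measure ℝ) : Prop :=
  FiniteFirstMoment θ ∧ CDOrder μ θ ∧ θ ≤ ν ∧
  ∀ θ' : Measure ℝ, FiniteFirstMoment θ' → CDOrder μ θ' → θ' ≤ ν → CDOrder θ θ'

/-- `P` is the Increasing Supermartingale Transport from `μ` to `ν`. -/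
def IsIncreasingSMT (μ ν : Measure ℝ) (P : Measure (ℝ × ℝ)) : Prop :=
  IsSupermartingaleCoupling P μ ν ∧
  ∀ x : ℝ, ∃ θ : Measure ℝ, IsShadow (μ.restrict (Set.Iic x)) ν θ ∧
    ∀ A : Set ℝ, MeasurableSet A → P (Set.Iic x ×ˢ A) = θ A

/-- `P` is the Decreasing Supermartingale Transport from `μ` to `ν`. -/
def IsDecreasingSMT (μ ν : Measure ℝ) (P : Measure (ℝ × ℝ)) : Prop :=
  IsSupermartingaleCoupling P μ ν ∧
  ∀ x : ℝ, ∃ θ : Measure ℝ, IsShadow (μ.restrict (Set.Ici x)) ν θ ∧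
    ∀ A : Set ℝ, MeasurableSet A → P (Set.Ici x ×ˢ A) = θ A

/-- Relaxed supermartingale Spence–Mirrlees property. -/
def RelaxedSupermartingaleSM (f : ℝ × ℝ → ℝ) : Prop :=
  ∀ x₁ x₂ : ℝ, x₁ < x₂ →
    Antitone (fun y : ℝ => f (x₂, y) - f (x₁, y)) ∧
    ConvexOn ℝ Set.univ (fun y : ℝ => f (x₂, y) - f (x₁, y))

/-- (Strict) supermartingale Spence–Mirrlees property. -/
def SupermartingaleSM (f : ℝ × ℝ → ℝ) : Prop :=
  ∀ x₁ x₂ : ℝ, x₁ < x₂ →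
    StrictAnti (fun y : ℝ => f (x₂, y) - f (x₁, y)) ∧
    StrictConvexOn ℝ Set.univ (fun y : ℝ => f (x₂, y) - f (x₁, y))

/-- `f⁺` is `S(μ,ν)`-uniformly integrable. -/
def PosPartUnifInt (μ ν : Measure ℝ) (f : ℝ × ℝ → ℝ) : Prop :=
  ∀ ε : ℝ, 0 < ε → ∃ N : ℝ, ∀ P : Measure (ℝ × ℝ),
    IsSupermartingaleCoupling P μ ν →
      ∫ p in {p : ℝ × ℝ | N < max (f p) 0}, max (f p) 0 ∂P ≤ ε

/-- First-order left monotonicity of `(Γ, M)`. -/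
def FirstOrderLeftMonotone (Γ : Set (ℝ × ℝ)) (M : Set ℝ) : Prop :=
  ∀ x₁ y₁ x₂ y₂ : ℝ, (x₁, y₁) ∈ Γ → (x₂, y₂) ∈ Γ → x₁ < x₂ → x₂ ∉ M → y₁ ≤ y₂

/-- First-order right monotonicity of `(Γ, M)`. -/
def FirstOrderRightMonotone (Γ : Set (ℝ × ℝ)) (M : Set ℝ) : Prop :=
  ∀ x₁ y₁ x₂ y₂ : ℝ, (x₁, y₁) ∈ Γ → (x₂, y₂) ∈ Γ → x₁ < x₂ → x₁ ∉ M → y₂ ≤ y₁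

/-- Second-order left monotonicity of `Γ`. -/
def SecondOrderLeftMonotone (Γ : Set (ℝ × ℝ)) : Prop :=
  ∀ x y₁ y₂ x' y' : ℝ, (x, y₁) ∈ Γ → (x, y₂) ∈ Γ → (x', y') ∈ Γ →
    y₁ < y₂ → x < x' → y' ∉ Set.Ioo y₁ y₂

/-- Second-order right monotonicity of `Γ`. -/
def SecondOrderRightMonotone (Γ : Set (ℝ × ℝ)) : Prop :=
  ∀ x y₁ y₂ x' y' : ℝ, (x, y₁) ∈ Γ → (x, y₂) ∈ Γ → (x', y') ∈ Γ →
    y₁ < y₂ → x' < x → y' ∉ Set.Ioo y₁ y₂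

/-- Nondegeneracy of `(Γ, M)`. -/
def Nondegenerate (Γ : Set (ℝ × ℝ)) (M : Set ℝ) : Prop :=
  (∀ x y : ℝ, (x, y) ∈ Γ → x < y → ∃ y' : ℝ, y' < x ∧ (x, y') ∈ Γ) ∧
  (∀ x y : ℝ, x ∈ M → (x, y) ∈ Γ → y < x → ∃ y' : ℝ, x < y' ∧ (x, y') ∈ Γ)

/-- The put function `p_μ`. -/
def put (μ : Measure ℝ) (t : ℝ) : ℝ := ∫ s, max (t - s) 0 ∂μ

/-- `x` is a barrier for the supermartingale transports from `μ` to `ν`. -/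
def IsBarrier (μ ν : Measure ℝ) (x : ℝ) : Prop :=
  ∀ P : Measure (ℝ × ℝ), IsSupermartingaleCoupling P μ ν →
    P {p : ℝ × ℝ | p.1 ≤ x ∧ x < p.2} = 0 ∧ P {p : ℝ × ℝ | x ≤ p.1 ∧ p.2 < x} = 0

/-- Barycenter of a finite measure (with `bary 0 = 0`). -/
def bary (θ : Measure ℝ) : ℝ := (∫ t, t ∂θ) / (θ Set.univ).toReal

/-! ### Convex hulls of functions on the line -/

/-- The convex hull (largest convex minorant) of `g`: the pointwise supremum of the convex
functions on `ℝ` lying below `g`. It is only meaningful when such functions exist. -/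
def hull (g : ℝ → ℝ) (t : ℝ) : ℝ :=
  ⨆ u : {u : ℝ → ℝ // ConvexOn ℝ univ u ∧ ∀ s, u s ≤ g s}, u.1 t

lemma hull_bddAbove (g : ℝ → ℝ) (t : ℝ) :
    BddAbove (range fun u : {u : ℝ → ℝ // ConvexOn ℝ univ u ∧ ∀ s, u s ≤ g s} => u.1 t) :=
  ⟨g t, by rintro _ ⟨u, rfl⟩; exact u.2.2 t⟩

lemma le_hull {g u : ℝ → ℝ} (hu : ConvexOn ℝ univ u) (h : ∀ s, u s ≤ g s) (t : ℝ) :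
    u t ≤ hull g t :=
  le_ciSup (hull_bddAbove g t) ⟨u, hu, h⟩

lemma hull_le {g u : ℝ → ℝ} (hu : ConvexOn ℝ univ u) (h : ∀ s, u s ≤ g s) (t : ℝ) :
    hull g t ≤ g t :=
  have : Nonempty {u : ℝ → ℝ // ConvexOn ℝ univ u ∧ ∀ s, u s ≤ g s} := ⟨⟨u, hu, h⟩⟩
  ciSup_le fun v => v.2.2 t

lemma hull_convex {g u : ℝ → ℝ} (hu : ConvexOn ℝ univ u) (h : ∀ s, u s ≤ g s) :
    ConvexOn ℝ univ (hull g) := by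
  have : Nonempty {u : ℝ → ℝ // ConvexOn ℝ univ u ∧ ∀ s, u s ≤ g s} := ⟨⟨u, hu, h⟩⟩
  refine ⟨convex_univ, fun x _ y _ a b ha hb hab => ciSup_le fun v => ?_⟩
  refine (v.2.1.2 (mem_univ x) (mem_univ y) ha hb hab).trans ?_
  simp only [smul_eq_mul]
  gcongr
  · exact le_hull v.2.1 v.2.2 x
  · exact le_hull v.2.1 v.2.2 y

lemma convex_continuous {f : ℝ → ℝ} (hf : ConvexOn ℝ univ f) : Continuous f :=
  continuousOn_univ.1 (hf.continuousOn isOpen_univ)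

lemma affine_convex (k m : ℝ) : ConvexOn ℝ univ fun t : ℝ => k * t + m := by
  refine ⟨convex_univ, fun x _ y _ a b _ _ hab => le_of_eq ?_⟩
  simp only [smul_eq_mul]
  linear_combination (-m) * hab

/-- Convexity through chords: `d` lies below `ℓ` on `[a, b]` as soon as it does at the end points,
for every affine `ℓ`. -/
lemma convex_of_chord {d : ℝ → ℝ}
    (H : ∀ a b k m : ℝ, a < b → d a ≤ k * a + m → d b ≤ k * b + m →
      ∀ x ∈ Icc a b, d x ≤ k * x + m) : ConvexOn ℝ univ d := by
  refine LinearOrder.convexOn_of_lt convex_univ fun x _ y _ hxy a b ha hb hab => ?_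
  obtain rfl : a = 1 - b := by linarith
  have hyx : y - x ≠ 0 := by linarith
  have e1 : (d y - d x) / (y - x) * (y - x) = d y - d x := div_mul_cancel₀ _ hyx
  have := H x y ((d y - d x) / (y - x)) (d x - (d y - d x) / (y - x) * x) hxy (by linarith)
    (by linarith) ((1 - b) * x + b * y) ⟨by nlinarith, by nlinarith⟩
  simp only [smul_eq_mul]
  refine this.trans (le_of_eq ?_)
  linear_combination b * e1

/-- For convex `c` a chord lies above `c` between its end points and below outside. -/
lemma chord_bounds {c : ℝ → ℝ} (hc : ConvexOn ℝ univ c) {a b k m : ℝ} (hab : a < b)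
    (ha : c a = k * a + m) (hb : c b = k * b + m) :
    (∀ x ∈ Icc a b, c x ≤ k * x + m) ∧ (∀ x, x ∉ Icc a b → k * x + m ≤ c x) := by
  constructor
  · rintro x ⟨h1, h2⟩
    rcases h1.eq_or_lt with rfl | h1
    · exact ha.le
    rcases h2.eq_or_lt with rfl | h2
    · exact hb.le
    have := hc.slope_mono_adjacent (mem_univ a) (mem_univ b) h1 h2
    rw [div_le_div_iff₀ (by linarith) (by linarith), ha, hb] at this
    by_contra hh
    push Not at hh
    nlinarith
  · intro x hx
    rcases lt_or_ge x a with h1 | h1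
    · have := hc.slope_mono_adjacent (mem_univ x) (mem_univ b) h1 hab
      rw [div_le_div_iff₀ (by linarith) (by linarith), ha, hb] at this
      by_contra hh
      push Not at hh
      nlinarith
    · have h2 : b < x := by
        by_contra h2
        exact hx ⟨h1, not_lt.1 h2⟩
      have := hc.slope_mono_adjacent (mem_univ a) (mem_univ x) hab h2
      rw [div_le_div_iff₀ (by linarith) (by linarith), ha, hb] at this
      by_contra hh
      push Not at hh
      nlinarith

/-- The convex hull of a continuous function is affine near every point where it does not touch the
function: replacing it by its chord over a short interval keeps it convex and below `g`. -/
lemma hull_affine_near {g u : ℝ → ℝ} (hu : ConvexOn ℝ univ u) (h : ∀ s, u s ≤ g s)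
    (hg : Continuous g) {x₀ : ℝ} (hx : hull g x₀ < g x₀) :
    ∃ ε > 0, ∃ k m : ℝ, ∀ x ∈ Icc (x₀ - ε) (x₀ + ε), hull g x = k * x + m := by
  have hc := hull_convex hu h
  have hcc := convex_continuous hc
  obtain ⟨M, hM1, hM2⟩ := exists_between hx
  have e1 : ∀ᶠ x in nhds x₀, hull g x < M := hcc.continuousAt.eventually_lt_const hM1
  have e2 : ∀ᶠ x in nhds x₀, M < g x := hg.continuousAt.eventually_const_lt hM2
  obtain ⟨ε, hε, hb⟩ := Metric.eventually_nhds_iff.1 (e1.and e2)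
  have key : ∀ x ∈ Icc (x₀ - ε / 2) (x₀ + ε / 2), hull g x < M ∧ M < g x := by
    rintro x ⟨h1, h2⟩
    apply hb
    rw [Real.dist_eq, abs_lt]
    constructor <;> linarith
  set a := x₀ - ε / 2 with ha
  set b := x₀ + ε / 2 with hb'
  have hab : a < b := by linarith
  have hyx : b - a ≠ 0 := by linarith
  set k := (hull g b - hull g a) / (b - a) with hk
  have e3 : k * (b - a) = hull g b - hull g a := div_mul_cancel₀ _ hyx
  set m := hull g a - k * a with hm
  have ha1 : hull g a = k * a + m := by rw [hm]; ring
  have hb1 : hull g b = k * b + m := by linarith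
  obtain ⟨c1, c2⟩ := chord_bounds hc hab ha1 hb1
  have hMa := (key a ⟨le_rfl, hab.le⟩).1
  have hMb := (key b ⟨hab.le, le_rfl⟩).1
  have hconv : ConvexOn ℝ univ (fun x => max (hull g x) (k * x + m)) :=
    hc.sup (affine_convex k m)
  have hle : ∀ s, max (hull g s) (k * s + m) ≤ g s := by
    intro s
    refine max_le (hull_le hu h s) ?_
    by_cases hs : s ∈ Icc a b
    · refine le_trans ?_ (key s hs).2.le
      -- an affine function below `M` at both end points is below `M` in between
      rw [ha1] at hMa
      rw [hb1] at hMb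
      rcases le_total 0 k with hk0 | hk0
      · nlinarith [hs.2]
      · nlinarith [hs.1]
    · exact (c2 s hs).trans (hull_le hu h s)
  refine ⟨ε / 2, by linarith, k, m, fun x hx => le_antisymm (c1 x hx) ?_⟩
  exact (le_max_right _ _).trans (le_hull hconv hle x)

/-- If `f` and `h` are convex, then `f - hull (f - h)` is convex. At the leftmost
maximum of `f - hull (f - h) - ℓ` over `[a, b]`, with `ℓ` affine dominating at the end points, either
`hull (f - h)` touches `f - h`, and then `h - ℓ` has an interior maximum, or `hull (f - h)` is affine
nearby, and then `f - hull (f - h)` is convex nearby. -/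
lemma sub_hull_convex {f h u : ℝ → ℝ} (hf : ConvexOn ℝ univ f) (hh : ConvexOn ℝ univ h)
    (hu : ConvexOn ℝ univ u) (hle : ∀ s, u s ≤ f s - h s) :
    ConvexOn ℝ univ (fun t => f t - hull (fun s => f s - h s) t) := by
  set g : ℝ → ℝ := fun s => f s - h s with hg
  have hgc : Continuous g := (convex_continuous hf).sub (convex_continuous hh)
  have hc := hull_convex (g := g) hu hle
  have hcc := convex_continuous hc
  have hfc := convex_continuous hf
  refine convex_of_chord fun a b k m hab ha hb => ?_
  by_contra hcon
  push Not at hcon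
  obtain ⟨z, hz, hzd⟩ := hcon
  set D : ℝ → ℝ := fun x => f x - hull g x - (k * x + m) with hD
  have hDc : Continuous D := by fun_prop
  obtain ⟨x1, hx1, hmax⟩ := isCompact_Icc.exists_isMaxOn ⟨z, hz⟩ hDc.continuousOn
  set K : Set ℝ := Icc a b ∩ {x | D x = D x1} with hK
  have hKc : IsCompact K := isCompact_Icc.inter_right (isClosed_eq hDc continuous_const)
  obtain ⟨x0, hx0, hmin⟩ := hKc.exists_isLeast ⟨x1, hx1, rfl⟩
  have hM : 0 < D x1 := by
    have : D z ≤ D x1 := hmax hz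
    have : 0 < D z := by simp only [hD]; linarith
    linarith
  have hmax' : ∀ x ∈ Icc a b, D x ≤ D x0 := fun x hx => by rw [hx0.2]; exact hmax hx
  have hDx0 : 0 < D x0 := by rw [hx0.2]; exact hM
  have hDa : D a ≤ 0 := by simp only [hD]; linarith
  have hDb : D b ≤ 0 := by simp only [hD]; linarith
  have hax : a < x0 := lt_of_le_of_ne hx0.1.1 (by rintro rfl; linarith)
  have hxb : x0 < b := lt_of_le_of_ne hx0.1.2 (by rintro rfl; linarith)
  have hleft : ∀ x, a ≤ x → x < x0 → D x < D x0 := by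
    intro x hx hxx
    refine lt_of_le_of_ne (hmax' x ⟨hx, by linarith⟩) fun heq => ?_
    have : x0 ≤ x := hmin ⟨⟨hx, by linarith⟩, heq.trans hx0.2⟩
    linarith
  have hhD : ∀ x, h x - (k * x + m) ≤ D x := by
    intro x
    have := hull_le hu hle x
    simp only [hD, hg] at this ⊢
    linarith
  -- a function with `v x0 = D x0`, `v ≤ D x0` and `v < D x0` on the left violates the slope
  -- inequality for convex functions
  rcases (hull_le hu hle x0).eq_or_lt with heq | hlt
  · have := hh.slope_mono_adjacent (mem_univ a) (mem_univ b) hax hxb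
    rw [div_le_div_iff₀ (by linarith) (by linarith)] at this
    have h0 : h x0 = D x0 + (k * x0 + m) := by simp only [hD, hg] at heq ⊢; linarith
    have h1 : h a < D x0 + (k * a + m) := by linarith [hhD a]
    have h2 : h b < D x0 + (k * b + m) := by linarith [hhD b]
    rw [h0] at this
    nlinarith
  · obtain ⟨ε, hε, k', m', haff⟩ := hull_affine_near hu hle hgc hlt
    set δ := min ε (min (x0 - a) (b - x0)) with hδ
    have hδ0 : 0 < δ := by simp only [hδ, lt_min_iff]; exact ⟨hε, by linarith, by linarith⟩
    have d1 : δ ≤ ε := min_le_left _ _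
    have d2 : δ ≤ x0 - a := (min_le_right _ _).trans (min_le_left _ _)
    have d3 : δ ≤ b - x0 := (min_le_right _ _).trans (min_le_right _ _)
    have := hf.slope_mono_adjacent (mem_univ (x0 - δ)) (mem_univ (x0 + δ))
      (by linarith : x0 - δ < x0) (by linarith : x0 < x0 + δ)
    rw [div_le_div_iff₀ (by linarith) (by linarith)] at this
    have h1 := hleft (x0 - δ) (by linarith) (by linarith)
    have h2 := hmax' (x0 + δ) ⟨by linarith, by linarith⟩
    have a0 := haff x0 ⟨by linarith, by linarith⟩
    have a1 := haff (x0 - δ) ⟨by linarith, by linarith⟩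
    have a2 := haff (x0 + δ) ⟨by linarith, by linarith⟩
    simp only [hD] at h1 h2
    nlinarith

/-! ### Measures from convex functions -/

open Filter Topology in
/-- A convex function with a finite limit at `-∞` is nondecreasing. -/
lemma convex_monotone_of_tendsto {d : ℝ → ℝ} {L : ℝ} (hd : ConvexOn ℝ univ d)
    (hlim : Tendsto d atBot (𝓝 L)) : Monotone d := by
  refine monotone_iff_forall_lt.2 fun x y hxy => ?_
  by_contra hcon
  push Not at hcon
  have e1 : ∀ᶠ a in atBot, d a < L + 1 := hlim.eventually_lt_const (by linarith)
  set κ := (d x - d y) / (y - x) with hκ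
  have hκ0 : 0 < κ := div_pos (by linarith) (by linarith)
  have e2 : ∀ᶠ a in atBot, a < min x (x - (L + 1 - d x) / κ) := eventually_lt_atBot _
  obtain ⟨a, ha1, ha2⟩ := (e1.and e2).exists
  rw [lt_min_iff] at ha2
  have hs := hd.slope_mono_adjacent (mem_univ a) (mem_univ y) ha2.1 hxy
  have : (d y - d x) / (y - x) = -κ := by rw [hκ]; ring
  rw [this, div_le_iff₀ (by linarith)] at hs
  have h3 : (L + 1 - d x) / κ < x - a := by linarith
  rw [div_lt_iff₀ hκ0] at h3
  nlinarith

/-- The put function with values in `ℝ≥0∞`; `ENNReal.ofReal` supplies the positive part. -/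
def lput (μ : Measure ℝ) (t : ℝ) : ℝ≥0∞ := ∫⁻ s, ENNReal.ofReal (t - s) ∂μ

lemma lput_eq_lintegral_Iic (σ : Measure ℝ) [SFinite σ] (u : ℝ) :
    lput σ u = ∫⁻ s in Iio u, σ (Iic s) := by
  have h1 : ∀ t : ℝ, ENNReal.ofReal (u - t) =
      ∫⁻ s in Iio u, ({p : ℝ × ℝ | p.1 ≤ p.2}.indicator 1 (t, s) : ℝ≥0∞) := by
    intro t
    have : ∀ s, ({p : ℝ × ℝ | p.1 ≤ p.2}.indicator 1 (t, s) : ℝ≥0∞) = (Ici t).indicator 1 s := by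
      intro s
      simp [indicator]
    simp_rw [this]
    rw [lintegral_indicator_one measurableSet_Ici, Measure.restrict_apply measurableSet_Ici,
      Ici_inter_Iio, Real.volume_Ico]
  have hm : Measurable ({p : ℝ × ℝ | p.1 ≤ p.2}.indicator (1 : ℝ × ℝ → ℝ≥0∞)) :=
    measurable_one.indicator (measurableSet_le measurable_fst measurable_snd)
  unfold lput
  simp_rw [h1]
  rw [lintegral_lintegral_swap (by exact hm.aemeasurable)]
  refine lintegral_congr fun s => ?_
  have : ∀ t, ({p : ℝ × ℝ | p.1 ≤ p.2}.indicator 1 (t, s) : ℝ≥0∞) = (Iic s).indicator 1 t := by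
    intro t
    simp [indicator]
  simp_rw [this]
  rw [lintegral_indicator_one measurableSet_Iic]

open Filter Topology in
/-- A convex function with limit `0` at `-∞` is the put function of the Stieltjes measure of its
right derivative. -/
lemma exists_measure_lput {d : ℝ → ℝ} (hd : ConvexOn ℝ univ d)
    (hlim : Tendsto d atBot (𝓝 0)) :
    ∃ σ : Measure ℝ, SFinite σ ∧ ∀ u, lput σ u = ENNReal.ofReal (d u) := by
  have hmono := convex_monotone_of_tendsto hd hlim
  have hdc := convex_continuous hd
  set r : ℝ → ℝ := fun x => derivWithin d (Ioi x) x with hr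
  have hmem : ∀ x : ℝ, x ∈ interior (univ : Set ℝ) := fun x => by simp
  have hrm : Monotone r := by
    have := hd.monotoneOn_rightDeriv
    rw [interior_univ, monotoneOn_univ] at this
    exact this
  have hrd : ∀ x, HasDerivWithinAt d (r x) (Ioi x) x := fun x =>
    hd.hasDerivWithinAt_rightDeriv_of_mem_interior (hmem x)
  have hr0 : ∀ x, 0 ≤ r x := by
    intro x
    have h1 := hd.slope_le_leftDeriv_of_mem_interior (x := x - 1) (y := x) (mem_univ _) (hmem x)
      (by linarith)
    have h2 := hd.leftDeriv_le_rightDeriv_of_mem_interior (hmem x)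
    have h3 : 0 ≤ slope d (x - 1) x := by
      rw [slope_def_field]
      exact div_nonneg (sub_nonneg.2 (hmono (by linarith))) (by linarith)
    exact h3.trans (h1.trans h2)
  have hr1 : ∀ x, r x ≤ d (x + 1) - d x := by
    intro x
    have := hd.rightDeriv_le_slope_of_mem_interior (x := x) (y := x + 1) (hmem x) (mem_univ _)
      (by linarith)
    rw [slope_def_field] at this
    simpa using this
  set F := hrm.stieltjesFunction with hF
  have hF0 : ∀ x, 0 ≤ F x := fun x => by
    rw [hF, hrm.stieltjesFunction_eq]
    exact (hr0 x).trans (hrm.le_rightLim le_rfl)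
  have hF1 : ∀ x, F x ≤ d (x + 2) - d (x + 1) := fun x => by
    rw [hF, hrm.stieltjesFunction_eq]
    have := hr1 (x + 1)
    rw [add_assoc, one_add_one_eq_two] at this
    exact (hrm.rightLim_le (by linarith : x < x + 1)).trans this
  have hFlim : Tendsto F atBot (𝓝 0) := by
    refine tendsto_of_tendsto_of_tendsto_of_le_of_le tendsto_const_nhds ?_ hF0 hF1
    have := (hlim.comp (tendsto_atBot_add_const_right _ (2 : ℝ) tendsto_id)).sub
      (hlim.comp (tendsto_atBot_add_const_right _ (1 : ℝ) tendsto_id))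
    simpa using this
  have hFr : ∀ᵐ x : ℝ, F x = r x := by
    have := hrm.countable_not_continuousAt.measure_zero (volume : Measure ℝ)
    filter_upwards [compl_mem_ae_iff.2 this] with x hx
    rw [hF, hrm.stieltjesFunction_eq]
    simp only [mem_compl_iff, mem_ofPred_eq, not_not] at hx
    exact hx.continuousWithinAt.rightLim_eq
  refine ⟨F.measure, inferInstance, fun u => ?_⟩
  have hii : ∀ a b : ℝ, IntervalIntegrable r volume a b := fun a b => hrm.intervalIntegrable
  have hftc : ∀ a : ℝ, ∫ y in a..u, r y = d u - d a := fun a =>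
    intervalIntegral.integral_eq_sub_of_hasDeriv_right hdc.continuousOn (fun x _ => hrd x) (hii a u)
  have hlim' : Tendsto (fun a : ℝ => ∫ y in a..u, r y) atBot (𝓝 (d u)) := by
    simp_rw [hftc]
    simpa using tendsto_const_nhds.sub hlim
  have hion : IntegrableOn r (Iic u) := by
    refine integrableOn_Iic_of_intervalIntegral_norm_tendsto (l := atBot) (a := id) (d u) u
      (fun a => ?_) tendsto_id ?_
    · rcases le_total a u with h | h
      · exact (intervalIntegrable_iff_integrableOn_Ioc_of_le h).1 (hii a u)
      · simp [Ioc_eq_empty (not_lt.2 h)]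
    · simpa [Real.norm_of_nonneg (hr0 _)] using hlim'
  have hval : ∫ y in Iic u, r y = d u :=
    tendsto_nhds_unique (intervalIntegral_tendsto_integral_Iic u hion tendsto_id) hlim'
  rw [lput_eq_lintegral_Iic, ← hval, ofReal_integral_eq_lintegral_ofReal hion
    (Eventually.of_forall hr0), ← restrict_Iio_eq_restrict_Iic]
  refine lintegral_congr_ae ?_
  filter_upwards [ae_restrict_of_ae hFr] with x hx
  rw [F.measure_Iic hFlim, sub_zero, hx]

lemma measurable_ofReal_sub (t : ℝ) : Measurable fun s : ℝ => ENNReal.ofReal (t - s) := by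
  fun_prop

lemma lput_add_measure (μ ν : Measure ℝ) (t : ℝ) : lput (μ + ν) t = lput μ t + lput ν t := by
  simp [lput]

/-- The slope of the put function between `u` and `v` lies between the masses of `(-∞, u]` and
`(-∞, v]`. -/
lemma mass_le_of_lput_eq {μ σ : Measure ℝ} (hfin : ∀ u, lput μ u ≠ ∞)
    (h : ∀ u, lput μ u = lput σ u) {u v : ℝ} (huv : u < v) : σ (Iic u) ≤ μ (Iic v) := by
  have h1 : ENNReal.ofReal (v - u) * σ (Iic u) + lput σ u ≤ lput σ v := by
    rw [← lintegral_indicator_const measurableSet_Iic, lput, lput,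
      ← lintegral_add_right _ (measurable_ofReal_sub u)]
    refine lintegral_mono fun s => ?_
    by_cases hs : s ≤ u
    · simp only [indicator, mem_Iic, hs, if_true]
      rw [← ENNReal.ofReal_add (by linarith) (by linarith)]
      exact ENNReal.ofReal_le_ofReal (by linarith)
    · simp only [indicator, mem_Iic, hs, if_false, zero_add]
      exact ENNReal.ofReal_le_ofReal (by linarith)
  have h2 : lput μ v ≤ ENNReal.ofReal (v - u) * μ (Iic v) + lput μ u := by
    rw [← lintegral_indicator_const measurableSet_Iic, lput, lput,
      ← lintegral_add_right _ (measurable_ofReal_sub u)]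
    refine lintegral_mono fun s => ?_
    by_cases hs : s ≤ v
    · simp only [indicator, mem_Iic, hs, if_true]
      refine le_trans (ENNReal.ofReal_le_ofReal (by linarith : v - s ≤ (v - u) + (u - s))) ?_
      exact ENNReal.ofReal_add_le
    · rw [ENNReal.ofReal_of_nonpos (by linarith)]
      exact zero_le
  rw [← h v, ← h u] at h1
  have h3 := (ENNReal.add_le_add_iff_right (hfin u)).1 (h1.trans h2)
  exact (ENNReal.mul_le_mul_iff_right (by simpa using huv) ENNReal.ofReal_ne_top).1 h3

open Filter Topology in
lemma le_Iic_of_forall_lt {μ σ : Measure ℝ} {u : ℝ} (hfin : ∃ v > u, μ (Iic v) ≠ ∞)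
    (h : ∀ v > u, σ (Iic u) ≤ μ (Iic v)) : σ (Iic u) ≤ μ (Iic u) := by
  have := tendsto_measure_biInter_gt (μ := μ) (s := fun v => Iic v) (a := u)
    (fun r _ => measurableSet_Iic.nullMeasurableSet) (fun i j _ hij => Iic_subset_Iic.2 hij) hfin
  have e : (⋂ r, ⋂ (_ : r > u), Iic r) = Iic u := by
    ext x
    simp only [mem_iInter, mem_Iic]
    exact ⟨fun hx => le_of_forall_gt_imp_ge_of_dense hx, fun hx r hr => hx.trans hr.le⟩
  rw [e] at this
  refine ge_of_tendsto this ?_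
  filter_upwards [self_mem_nhdsWithin] with v hv
  exact h v hv

/-- A finite measure is determined by its put function. -/
lemma eq_of_lput_eq {μ σ : Measure ℝ} [IsFiniteMeasure μ] (hfin : ∀ u, lput μ u ≠ ∞)
    (h : ∀ u, lput μ u = lput σ u) : μ = σ := by
  have h1 : ∀ u v, u < v → σ (Iic u) ≤ μ (Iic v) := fun u v => mass_le_of_lput_eq hfin h
  have h2 : ∀ u v, u < v → μ (Iic u) ≤ σ (Iic v) := fun u v =>
    mass_le_of_lput_eq (fun u => h u ▸ hfin u) (fun u => (h u).symm)
  refine Measure.ext_of_Iic μ σ fun a => le_antisymm ?_ ?_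
  · refine le_Iic_of_forall_lt ⟨a + 1, by simp, ?_⟩ fun v hv => h2 a v hv
    exact ((h1 (a + 1) (a + 2) (by linarith)).trans_lt (measure_lt_top _ _)).ne
  · exact le_Iic_of_forall_lt ⟨a + 1, by simp, measure_ne_top _ _⟩ fun v hv => h1 a v hv

/-! ### Put functions of measures with finite first moment -/

lemma FiniteFirstMoment.mono {θ ν : Measure ℝ} (hν : FiniteFirstMoment ν) (h : θ ≤ ν) :
    FiniteFirstMoment θ :=
  haveI := hν.1
  ⟨isFiniteMeasure_of_le ν h, hν.2.mono_measure h⟩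

lemma FiniteFirstMoment.restrict {μ : Measure ℝ} (hμ : FiniteFirstMoment μ) (s : Set ℝ) :
    FiniteFirstMoment (μ.restrict s) :=
  hμ.mono Measure.restrict_le_self

lemma FiniteFirstMoment.integrable_put {μ : Measure ℝ} (hμ : FiniteFirstMoment μ) (t : ℝ) :
    Integrable (fun s => max (t - s) 0) μ := by
  have := hμ.1
  exact ((integrable_const t).sub hμ.2).pos_part

lemma put_nonneg (μ : Measure ℝ) (t : ℝ) : 0 ≤ put μ t :=
  integral_nonneg fun _ => le_max_right _ _

lemma lput_eq {μ : Measure ℝ} (hμ : FiniteFirstMoment μ) (t : ℝ) :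
    lput μ t = ENNReal.ofReal (put μ t) := by
  rw [put, ofReal_integral_eq_lintegral_ofReal (hμ.integrable_put t)
    (Filter.Eventually.of_forall fun _ => le_max_right _ _)]
  refine lintegral_congr fun s => ?_
  rcases le_total (t - s) 0 with h | h
  · rw [max_eq_right h, ENNReal.ofReal_of_nonpos h, ENNReal.ofReal_zero]
  · rw [max_eq_left h]

lemma put_eq_of_lput {μ : Measure ℝ} (hμ : FiniteFirstMoment μ) {t r : ℝ} (hr : 0 ≤ r)
    (h : lput μ t = ENNReal.ofReal r) : put μ t = r := by
  rw [lput_eq hμ] at h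
  exact (ENNReal.ofReal_eq_ofReal_iff (put_nonneg _ _) hr).1 h

lemma put_add_measure {μ ν : Measure ℝ} (hμ : FiniteFirstMoment μ) (hν : FiniteFirstMoment ν)
    (t : ℝ) : put (μ + ν) t = put μ t + put ν t :=
  integral_add_measure (hμ.integrable_put t) (hν.integrable_put t)

lemma put_mono_measure {μ ν : Measure ℝ} (hν : FiniteFirstMoment ν) (h : μ ≤ ν) (t : ℝ) :
    put μ t ≤ put ν t :=
  integral_mono_measure h (Filter.Eventually.of_forall fun _ => le_max_right _ _)
    (hν.integrable_put t)

lemma put_convex {μ : Measure ℝ} (hμ : FiniteFirstMoment μ) : ConvexOn ℝ univ (put μ) := by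
  refine ⟨convex_univ, fun x _ y _ a b ha hb hab => ?_⟩
  have hx := (hμ.integrable_put x).const_mul a
  have hy := (hμ.integrable_put y).const_mul b
  simp only [put, smul_eq_mul]
  rw [← integral_const_mul, ← integral_const_mul, ← integral_add hx hy]
  refine integral_mono (hμ.integrable_put _) (hx.add hy) fun s => ?_
  refine max_le ?_ (by positivity)
  have h1 := mul_le_mul_of_nonneg_left (le_max_left (x - s) 0) ha
  have h2 := mul_le_mul_of_nonneg_left (le_max_left (y - s) 0) hb
  have h3 : a * x + b * y - s = a * (x - s) + b * (y - s) := by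
    linear_combination s * hab
  linarith

open Filter Topology in
lemma put_tendsto_atBot {μ : Measure ℝ} (hμ : FiniteFirstMoment μ) :
    Tendsto (put μ) atBot (𝓝 0) := by
  have := tendsto_integral_filter_of_dominated_convergence (μ := μ) (l := atBot)
    (F := fun t s => max (t - s) 0) (f := fun _ => 0) (fun s => |s|)
    (Eventually.of_forall fun t => (hμ.integrable_put t).aestronglyMeasurable)
    (by
      filter_upwards [eventually_le_atBot (0 : ℝ)] with t ht
      refine Eventually.of_forall fun s => ?_
      rw [Real.norm_of_nonneg (le_max_right _ _)]
      exact max_le (by linarith [neg_abs_le s]) (abs_nonneg s))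
    hμ.2.abs
    (Eventually.of_forall fun s => by
      refine tendsto_const_nhds.congr' ?_
      filter_upwards [eventually_le_atBot s] with t ht
      rw [max_eq_right (by linarith)])
  rw [integral_zero] at this
  exact this

lemma put_eq_measure_eq {μ ν : Measure ℝ} (hμ : FiniteFirstMoment μ) (hν : FiniteFirstMoment ν)
    (h : ∀ t, put μ t = put ν t) : μ = ν := by
  have := hμ.1
  refine eq_of_lput_eq (fun u => ?_) fun u => ?_
  · rw [lput_eq hμ]; exact ENNReal.ofReal_ne_top
  · rw [lput_eq hμ, lput_eq hν, h]

open Filter Topology in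
/-- A decomposition of a put function into nonnegative convex functions comes from a decomposition
of the measure. -/
lemma exists_split {ν : Measure ℝ} (hν : FiniteFirstMoment ν) {c e : ℝ → ℝ}
    (hc : ConvexOn ℝ univ c) (he : ConvexOn ℝ univ e) (hc0 : ∀ t, 0 ≤ c t) (he0 : ∀ t, 0 ≤ e t)
    (hsum : ∀ t, put ν t = c t + e t) :
    ∃ σ₁ σ₂ : Measure ℝ, FiniteFirstMoment σ₁ ∧ FiniteFirstMoment σ₂ ∧ ν = σ₁ + σ₂ ∧
      (∀ t, put σ₁ t = c t) ∧ ∀ t, put σ₂ t = e t := by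
  have hlim := put_tendsto_atBot hν
  have hcl : Tendsto c atBot (𝓝 0) :=
    squeeze_zero hc0 (fun t => by linarith [hsum t, he0 t]) hlim
  have hel : Tendsto e atBot (𝓝 0) :=
    squeeze_zero he0 (fun t => by linarith [hsum t, hc0 t]) hlim
  obtain ⟨σ₁, -, h₁⟩ := exists_measure_lput hc hcl
  obtain ⟨σ₂, -, h₂⟩ := exists_measure_lput he hel
  have := hν.1
  have hadd : ν = σ₁ + σ₂ := by
    refine eq_of_lput_eq (fun u => ?_) fun u => ?_
    · rw [lput_eq hν]; exact ENNReal.ofReal_ne_top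
    · rw [lput_eq hν, lput_add_measure, h₁, h₂, hsum, ENNReal.ofReal_add (hc0 u) (he0 u)]
  have f₁ : FiniteFirstMoment σ₁ := hν.mono (hadd ▸ Measure.le_add_right le_rfl)
  have f₂ : FiniteFirstMoment σ₂ := hν.mono (hadd ▸ Measure.le_add_left le_rfl)
  exact ⟨σ₁, σ₂, f₁, f₂, hadd, fun t => put_eq_of_lput f₁ (hc0 t) (h₁ t),
    fun t => put_eq_of_lput f₂ (he0 t) (h₂ t)⟩

/-! ### The convex-decreasing order through put functions -/

lemma FiniteFirstMoment.integrable_of_linearGrowth {μ : Measure ℝ} (hμ : FiniteFirstMoment μ)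
    {φ : ℝ → ℝ} (hm : Measurable φ) (hg : LinearGrowth φ) : Integrable φ μ := by
  have := hμ.1
  obtain ⟨C, hC⟩ := hg
  refine Integrable.mono' (((integrable_const (1 : ℝ)).add hμ.2.abs).const_mul C)
    hm.aestronglyMeasurable (Filter.Eventually.of_forall fun x => ?_)
  exact hC x

lemma put_le_of_cdOrder {μ ν : Measure ℝ} (h : CDOrder μ ν) (t : ℝ) : put μ t ≤ put ν t := by
  refine h (fun s => max (t - s) 0) ?_ ?_ ?_
  · have := (affine_convex (-1) t).sup (affine_convex 0 0)
    have e : (fun s : ℝ => max (t - s) 0) =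
        (fun s : ℝ => -1 * s + t) ⊔ fun s : ℝ => 0 * s + 0 := by
      ext s
      simp only [Pi.sup_apply]
      congr 1 <;> ring
    rw [e]
    exact this
  · intro a b hab
    exact max_le_max (by linarith) le_rfl
  · refine ⟨1 + |t|, fun x => ?_⟩
    rw [abs_of_nonneg (le_max_right _ _)]
    have h1 := le_abs_self t
    have h2 := neg_abs_le x
    have h3 := abs_nonneg t
    have h4 := abs_nonneg x
    exact max_le (by nlinarith) (by positivity)

lemma mass_eq_of_cdOrder {μ ν : Measure ℝ} [IsFiniteMeasure μ] [IsFiniteMeasure ν]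
    (h : CDOrder μ ν) : μ univ = ν univ := by
  have key : ∀ c : ℝ, ∫ _, c ∂μ ≤ ∫ _, c ∂ν := fun c =>
    h (fun _ => c) (convexOn_const c convex_univ) antitone_const
      ⟨|c|, fun x => by nlinarith [abs_nonneg c, abs_nonneg x]⟩
  have h1 := key 1
  have h2 := key (-1)
  simp only [integral_const, smul_eq_mul] at h1 h2
  refine (ENNReal.toReal_eq_toReal_iff' (measure_ne_top _ _) (measure_ne_top _ _)).1 ?_
  simp only [Measure.real] at h1 h2
  linarith

open Filter Topology in
/-- For `φ` bounded below, `φ - inf φ` is a superposition of the functions `s ↦ (t - s)⁺`: apply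
`exists_measure_lput` to the reflection of `φ`. -/
lemma integral_le_of_put_le_of_bdd {μ ν : Measure ℝ} (hμ : FiniteFirstMoment μ)
    (hν : FiniteFirstMoment ν) (hmass : μ univ = ν univ) (hput : ∀ t, put μ t ≤ put ν t)
    {φ : ℝ → ℝ} (hφ : ConvexOn ℝ univ φ) (hanti : Antitone φ) (hg : LinearGrowth φ)
    {B : ℝ} (hB : ∀ x, B ≤ φ x) : ∫ x, φ x ∂μ ≤ ∫ x, φ x ∂ν := by
  have := hμ.1
  have := hν.1
  have hφc := convex_continuous hφ
  have hψm : Monotone fun u => φ (-u) := fun a b hab => hanti (by linarith)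
  have hbdd : BddBelow (range fun u => φ (-u)) := ⟨B, by rintro _ ⟨u, rfl⟩; exact hB _⟩
  set L := ⨅ u, φ (-u) with hL
  have hlim : Tendsto (fun u => φ (-u)) atBot (𝓝 L) := tendsto_atBot_ciInf hψm hbdd
  have hLφ : ∀ s, L ≤ φ s := fun s => by
    have := ciInf_le hbdd (-s)
    simpa using this
  have hconv : ConvexOn ℝ univ (fun u => φ (-u) - L) := by
    refine ⟨convex_univ, fun x _ y _ a b ha hb hab => ?_⟩
    have := hφ.2 (mem_univ (-x)) (mem_univ (-y)) ha hb hab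
    simp only [smul_eq_mul] at this ⊢
    have e : a * -x + b * -y = -(a * x + b * y) := by ring
    rw [e] at this
    obtain rfl : a = 1 - b := by linarith
    linarith
  obtain ⟨σ, hσ, hrep⟩ := exists_measure_lput hconv (by simpa using hlim.sub_const L)
  have hrep' : ∀ s, ENNReal.ofReal (φ s - L) = ∫⁻ t, ENNReal.ofReal (-s - t) ∂σ := fun s => by
    have := hrep (-s)
    rw [neg_neg] at this
    exact this.symm
  have hfub : ∀ κ : Measure ℝ, IsFiniteMeasure κ →
      ∫⁻ s, ENNReal.ofReal (φ s - L) ∂κ = ∫⁻ t, lput κ (-t) ∂σ := by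
    intro κ _
    simp_rw [hrep']
    rw [lintegral_lintegral_swap (by fun_prop)]
    refine lintegral_congr fun t => lintegral_congr fun s => ?_
    rw [sub_eq_add_neg, sub_eq_add_neg, add_comm]
  have hI : ∀ κ : Measure ℝ, FiniteFirstMoment κ → Integrable φ κ := fun κ hκ =>
    hκ.integrable_of_linearGrowth hφc.measurable hg
  have hle : ∫⁻ s, ENNReal.ofReal (φ s - L) ∂μ ≤ ∫⁻ s, ENNReal.ofReal (φ s - L) ∂ν := by
    rw [hfub μ hμ.1, hfub ν hν.1]
    refine lintegral_mono fun t => ?_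
    rw [lput_eq hμ, lput_eq hν]
    exact ENNReal.ofReal_le_ofReal (hput _)
  have hIL : ∀ κ : Measure ℝ, FiniteFirstMoment κ → Integrable (fun s => φ s - L) κ := fun κ hκ =>
    haveI := hκ.1
    (hI κ hκ).sub (integrable_const L)
  rw [← ofReal_integral_eq_lintegral_ofReal (hIL μ hμ)
      (Eventually.of_forall fun s => sub_nonneg.2 (hLφ s)),
    ← ofReal_integral_eq_lintegral_ofReal (hIL ν hν)
      (Eventually.of_forall fun s => sub_nonneg.2 (hLφ s)),
    ENNReal.ofReal_le_ofReal_iff (integral_nonneg fun s => sub_nonneg.2 (hLφ s)),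
    integral_sub (hI μ hμ) (integrable_const L), integral_sub (hI ν hν) (integrable_const L)] at hle
  simp only [integral_const, Measure.real, hmass] at hle
  linarith

open Filter Topology in
/-- Measures of equal mass with ordered put functions are in convex-decreasing order. -/
lemma cdOrder_of_put_le {μ ν : Measure ℝ} (hμ : FiniteFirstMoment μ)
    (hν : FiniteFirstMoment ν) (hmass : μ univ = ν univ) (hput : ∀ t, put μ t ≤ put ν t) :
    CDOrder μ ν := by
  intro φ hφ hanti hg
  have hφc := convex_continuous hφ
  have hbound : ∀ (n : ℕ) x, |max (φ x) (-(n : ℝ))| ≤ |φ x| := by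
    intro n x
    have hn : (0 : ℝ) ≤ n := n.cast_nonneg
    rw [abs_le]
    exact ⟨(neg_abs_le _).trans (le_max_left _ _), max_le (le_abs_self _)
      (by linarith [abs_nonneg (φ x)])⟩
  have hlim : ∀ κ : Measure ℝ, FiniteFirstMoment κ →
      Tendsto (fun n : ℕ => ∫ x, max (φ x) (-(n : ℝ)) ∂κ) atTop (𝓝 (∫ x, φ x ∂κ)) := by
    intro κ hκ
    refine tendsto_integral_of_dominated_convergence (fun x => |φ x|)
      (fun n => (hφc.max continuous_const).aestronglyMeasurable)
      (hκ.integrable_of_linearGrowth hφc.measurable hg).abs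
      (fun n => Eventually.of_forall (hbound n)) (Eventually.of_forall fun x => ?_)
    refine tendsto_const_nhds.congr' ?_
    filter_upwards [eventually_ge_atTop ⌈-φ x⌉₊] with n hn
    have := Nat.ceil_le.1 hn
    rw [max_eq_left (by linarith)]
  refine le_of_tendsto_of_tendsto' (hlim μ hμ) (hlim ν hν) fun n => ?_
  obtain ⟨C, hC⟩ := hg
  exact integral_le_of_put_le_of_bdd hμ hν hmass hput
    (hφ.sup (convexOn_const _ convex_univ)) (fun a b hab => max_le_max (hanti hab) le_rfl)
    ⟨C, fun x => (hbound n x).trans (hC x)⟩ (B := -(n : ℝ)) fun x => le_max_right _ _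

/-! ### Masses and put functions -/

lemma put_ge_affine {μ : Measure ℝ} (hμ : FiniteFirstMoment μ) (t : ℝ) :
    μ.real univ * t - ∫ s, |s| ∂μ ≤ put μ t := by
  have := hμ.1
  have h1 : ∫ s, (t - |s|) ∂μ = μ.real univ * t - ∫ s, |s| ∂μ := by
    rw [integral_sub (integrable_const t) hμ.2.abs]
    simp
  rw [← h1]
  refine integral_mono ((integrable_const t).sub hμ.2.abs) (hμ.integrable_put t) fun s => ?_
  exact le_max_of_le_left (by linarith [le_abs_self s])

lemma put_le_affine {μ : Measure ℝ} (hμ : FiniteFirstMoment μ) {t : ℝ} (ht : 0 ≤ t) :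
    put μ t ≤ μ.real univ * t + ∫ s, |s| ∂μ := by
  have := hμ.1
  have h1 : ∫ s, (t + |s|) ∂μ = μ.real univ * t + ∫ s, |s| ∂μ := by
    rw [integral_add (integrable_const t) hμ.2.abs]
    simp
  rw [← h1]
  refine integral_mono (hμ.integrable_put t) ((integrable_const t).add hμ.2.abs) fun s => ?_
  exact max_le (by linarith [neg_abs_le s]) (by positivity)

/-- The growth rate of the put function at `+∞` is at most the mass. -/
lemma le_mass_of_affine_le {μ : Measure ℝ} (hμ : FiniteFirstMoment μ) {m K : ℝ}
    (h : ∀ t, 0 ≤ t → m * t - K ≤ put μ t) : m ≤ μ.real univ := by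
  by_contra hcon
  push Not at hcon
  set δ := m - μ.real univ with hδ
  have hδ0 : 0 < δ := by linarith
  set R := |K| + ∫ s, |s| ∂μ with hR
  have hR0 : 0 ≤ R := add_nonneg (abs_nonneg _) (integral_nonneg fun _ => abs_nonneg _)
  have ht : 0 ≤ (R + 1) / δ := by positivity
  have h1 := h _ ht
  have h2 := put_le_affine hμ ht
  have h3 : δ * ((R + 1) / δ) = R + 1 := mul_div_cancel₀ _ hδ0.ne'
  rw [hδ, sub_mul, ← hδ] at h3
  linarith [le_abs_self K]

/-! ### Shadows -/

lemma exists_add_of_le {θ ν : Measure ℝ} [IsFiniteMeasure ν] (h : θ ≤ ν) :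
    ∃ ρ : Measure ℝ, ν = θ + ρ ∧ ρ ≤ ν := by
  have := isFiniteMeasure_of_le ν h
  exact ⟨ν - θ, by rw [add_comm, Measure.sub_add_cancel_of_le h], Measure.sub_le⟩

lemma measure_add_right_cancel {α β γ : Measure ℝ} [IsFiniteMeasure γ] (h : α + γ = β + γ) :
    α = β := by
  ext s hs
  have := congrArg (fun m : Measure ℝ => m s) h
  simp only [Measure.add_apply] at this
  exact (ENNReal.add_left_inj (measure_ne_top γ s)).1 this

/-- The shadow of `μ` in `ν` is `ν - ρ`, where the remainder `ρ` has as put function the convex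
hull of `put ν - put μ`. -/
lemma exists_shadow {μ ν : Measure ℝ} (hμ : FiniteFirstMoment μ) (hν : FiniteFirstMoment ν)
    (hput : ∀ t, put μ t ≤ put ν t) (hmass : μ.real univ ≤ ν.real univ) :
    ∃ θ ρ : Measure ℝ, FiniteFirstMoment ρ ∧ ν = θ + ρ ∧
      (∀ t, put ρ t = hull (fun s => put ν s - put μ s) t) ∧ IsShadow μ ν θ := by
  have := hμ.1
  have := hν.1
  set g : ℝ → ℝ := fun s => put ν s - put μ s with hg
  have h0 : ConvexOn ℝ univ fun _ : ℝ => (0 : ℝ) := convexOn_const 0 convex_univ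
  have h0g : ∀ s, (0 : ℝ) ≤ g s := fun s => sub_nonneg.2 (hput s)
  have hd := sub_hull_convex (put_convex hν) (put_convex hμ) h0 h0g
  have hhg : ∀ t, hull g t ≤ g t := hull_le h0 h0g
  obtain ⟨ρ, θ, hρ, hθ, hadd, hpρ, hpθ⟩ := exists_split hν (hull_convex h0 h0g) hd
    (le_hull h0 h0g) (fun t => by
      have h1 := hhg t
      have h2 := put_nonneg μ t
      simp only [hg] at h1 ⊢
      linarith) (fun t => by ring)
  have := hρ.1
  have := hθ.1
  have hpμθ : ∀ t, put μ t ≤ put θ t := fun t => by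
    have h1 := hhg t
    rw [hpθ]
    simp only [hg] at h1 ⊢
    linarith
  -- `put ν - put μ` dominates an affine function whose slope is the difference of the masses
  have hρmass : ν.real univ - μ.real univ ≤ ρ.real univ := by
    set K := (∫ s, |s| ∂ν) + ∫ s, |s| ∂μ with hK
    have hK0 : 0 ≤ K :=
      add_nonneg (integral_nonneg fun _ => abs_nonneg _) (integral_nonneg fun _ => abs_nonneg _)
    refine le_mass_of_affine_le hρ (K := K) fun t _ => ?_
    rw [hpρ, sub_eq_add_neg]
    refine le_hull (affine_convex _ (-K)) (fun s => ?_) t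
    rcases le_total 0 s with hs | hs
    · have h1 := put_ge_affine hν s
      have h2 := put_le_affine hμ hs
      simp only [hg]
      linarith
    · have := h0g s
      nlinarith
  have hadd' : ν.real univ = ρ.real univ + θ.real univ := by
    rw [hadd, measureReal_add_apply]
  have hθmass : θ.real univ = μ.real univ := by
    refine le_antisymm (by linarith) ?_
    exact le_mass_of_affine_le hθ fun t _ => (put_ge_affine hμ t).trans (hpμθ t)
  have hθmass' : θ univ = μ univ :=
    (ENNReal.toReal_eq_toReal_iff' (measure_ne_top _ _) (measure_ne_top _ _)).1 hθmass
  refine ⟨θ, ρ, hρ, by rw [hadd, add_comm], hpρ, hθ,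
    cdOrder_of_put_le hμ hθ hθmass'.symm hpμθ, hadd ▸ Measure.le_add_left le_rfl, ?_⟩
  intro θ' hθ' hcd hle
  have := hθ'.1
  obtain ⟨ρ', hadd₂, hρ'le⟩ := exists_add_of_le hle
  have hρ' := hν.mono hρ'le
  have hpν : ∀ t, put ν t = put θ' t + put ρ' t := fun t => by
    conv_lhs => rw [hadd₂]
    exact put_add_measure hθ' hρ' t
  refine cdOrder_of_put_le hθ hθ' (hθmass'.trans (mass_eq_of_cdOrder hcd)) fun t => ?_
  have h1 : put ρ' t ≤ hull g t := le_hull (put_convex hρ') (fun s => by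
    have h1 := put_le_of_cdOrder hcd s
    have h2 := hpν s
    simp only [hg]
    linarith) t
  rw [hpθ]
  have h2 := hpν t
  change put ν t - hull g t ≤ _
  linarith

/-- If the initial measure grows from `μ` to `μ + η`, the shadow grows by a measure dominating `η`
in convex-decreasing order. The remainder of the larger shadow has put function
`hull (put ρ - put η)`, where `ρ` is the remainder of the smaller one, so the increment of the
shadows is obtained by splitting `ρ`. -/
lemma shadow_increment {μ η ν θ₁ θ₂ ρ₁ ρ₂ : Measure ℝ} (hμ : FiniteFirstMoment μ)
    (hη : FiniteFirstMoment η) (hν : FiniteFirstMoment ν)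
    (hput : ∀ t, put (μ + η) t ≤ put ν t)
    (hρ₁ : FiniteFirstMoment ρ₁) (hρ₂ : FiniteFirstMoment ρ₂)
    (ha₁ : ν = θ₁ + ρ₁) (ha₂ : ν = θ₂ + ρ₂)
    (hp₁ : ∀ t, put ρ₁ t = hull (fun s => put ν s - put μ s) t)
    (hp₂ : ∀ t, put ρ₂ t = hull (fun s => put ν s - put (μ + η) s) t)
    (hs₁ : IsShadow μ ν θ₁) (hs₂ : IsShadow (μ + η) ν θ₂) :
    ∃ κ : Measure ℝ, FiniteFirstMoment κ ∧ θ₂ = θ₁ + κ ∧ CDOrder η κ := by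
  have := hμ.1
  have := hη.1
  have := hν.1
  have := hρ₂.1
  have := hs₁.1.1
  have := hs₂.1.1
  have h0 : ConvexOn ℝ univ fun _ : ℝ => (0 : ℝ) := convexOn_const 0 convex_univ
  have hpadd : ∀ t, put (μ + η) t = put μ t + put η t := put_add_measure hμ hη
  have h0g₂ : ∀ s, (0 : ℝ) ≤ put ν s - put (μ + η) s := fun s => sub_nonneg.2 (hput s)
  have h0g₁ : ∀ s, (0 : ℝ) ≤ put ν s - put μ s := fun s => by
    have h1 := h0g₂ s
    have h2 := hpadd s
    have h3 := put_nonneg η s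
    linarith
  have hle₁ : ∀ t, put ρ₁ t ≤ put ν t - put μ t := fun t => by
    rw [hp₁]; exact hull_le h0 h0g₁ t
  have hle₂ : ∀ t, put ρ₂ t ≤ put ν t - put (μ + η) t := fun t => by
    rw [hp₂]; exact hull_le h0 h0g₂ t
  have hsum : ∀ t, put ρ₂ t ≤ put ρ₁ t - put η t := fun t => by
    have : put ρ₂ t + put η t ≤ put ρ₁ t := by
      rw [hp₁]
      refine le_hull (u := fun t => put ρ₂ t + put η t) ((put_convex hρ₂).add (put_convex hη))
        (fun s => ?_) t
      have h1 := hle₂ s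
      have h2 := hpadd s
      linarith
    linarith
  have hhull : ∀ t, put ρ₂ t = hull (fun s => put ρ₁ s - put η s) t := fun t => by
    refine le_antisymm (le_hull (put_convex hρ₂) hsum t) ?_
    rw [hp₂]
    refine le_hull (hull_convex (put_convex hρ₂) hsum) (fun s => ?_) t
    have h1 := hull_le (put_convex hρ₂) hsum s
    have h2 := hle₁ s
    have h3 := hpadd s
    linarith
  have hconv : ConvexOn ℝ univ fun t => put ρ₁ t - put ρ₂ t := by
    simp_rw [hhull]
    exact sub_hull_convex (put_convex hρ₁) (put_convex hη) (put_convex hρ₂) hsum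
  obtain ⟨σ, κ, hσ, hκ, hadd, hpσ, hpκ⟩ := exists_split hρ₁ (put_convex hρ₂) hconv (put_nonneg ρ₂)
    (fun t => by linarith [hsum t, put_nonneg η t]) (fun t => by ring)
  obtain rfl : σ = ρ₂ := put_eq_measure_eq hσ hρ₂ hpσ
  have := hκ.1
  have hθ : θ₂ = θ₁ + κ := by
    refine measure_add_right_cancel (γ := σ) ?_
    rw [← ha₂, ha₁, hadd, add_assoc, add_comm κ σ]
  refine ⟨κ, hκ, hθ, cdOrder_of_put_le hη hκ ?_ fun t => ?_⟩
  · have m₁ := mass_eq_of_cdOrder hs₁.2.1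
    have m₂ := mass_eq_of_cdOrder hs₂.2.1
    rw [hθ, Measure.add_apply, Measure.add_apply, m₁] at m₂
    exact (ENNReal.add_right_inj (measure_ne_top _ _)).1 m₂
  · rw [hpκ]
    linarith [hsum t]

/-! ### Gluing an increasing family of measures into a joint law -/

open Filter Topology in
lemma tendsto_measure_Iic_right (α : Measure ℝ) [IsFiniteMeasure α] (x : ℝ) :
    Tendsto (fun y => α (Iic y)) (𝓝[>] x) (𝓝 (α (Iic x))) := by
  have := tendsto_measure_biInter_gt (μ := α) (s := fun v => Iic v) (a := x)
    (fun r _ => measurableSet_Iic.nullMeasurableSet) (fun i j _ hij => Iic_subset_Iic.2 hij)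
    ⟨x + 1, by simp, measure_ne_top _ _⟩
  have e : (⋂ r, ⋂ (_ : r > x), Iic r) = Iic x := by
    ext z
    simp only [mem_iInter, mem_Iic]
    exact ⟨fun hx => le_of_forall_gt_imp_ge_of_dense hx, fun hx r hr => hx.trans hr.le⟩
  rw [e] at this
  exact this

open Filter Topology in
lemma tendsto_measure_Iic_bot (α : Measure ℝ) [IsFiniteMeasure α] :
    Tendsto (fun y => α (Iic y)) atBot (𝓝 0) := by
  have := tendsto_measure_iInter_atBot (μ := α) (s := fun v : ℝ => Iic v)
    (fun r => measurableSet_Iic.nullMeasurableSet) (fun i j hij => Iic_subset_Iic.2 hij)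
    ⟨0, measure_ne_top _ _⟩
  have e : (⋂ r : ℝ, Iic r) = ∅ := by
    ext z
    simp only [mem_iInter, mem_Iic, mem_empty_iff_false, iff_false, not_forall, not_le]
    exact exists_lt z
  rw [e, measure_empty] at this
  exact this

open Filter Topology in
/-- Domination of finite measures on half-open intervals extends to all Borel sets: the difference
of the distribution functions is itself the distribution function of a measure. -/
lemma measure_le_of_Ioc_le {α β : Measure ℝ} [IsFiniteMeasure α] [IsFiniteMeasure β]
    (h : ∀ a b, a < b → α (Ioc a b) ≤ β (Ioc a b)) : α ≤ β := by
  have hreal : ∀ (γ : Measure ℝ) [IsFiniteMeasure γ] (a b : ℝ), a < b →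
      (γ (Iic b)).toReal = (γ (Iic a)).toReal + (γ (Ioc a b)).toReal := by
    intro γ _ a b hab
    rw [← ENNReal.toReal_add (measure_ne_top _ _) (measure_ne_top _ _),
      ← measure_union _ measurableSet_Ioc, Iic_union_Ioc_eq_Iic hab.le]
    rw [Set.disjoint_left]
    intro z hz hz'
    exact absurd hz'.1 (not_lt.2 hz)
  let F : StieltjesFunction ℝ :=
    { toFun := fun x => (β (Iic x)).toReal - (α (Iic x)).toReal
      mono' := by
        refine monotone_iff_forall_lt.2 fun a b hab => ?_
        have h1 := hreal α a b hab
        have h2 := hreal β a b hab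
        have h3 := ENNReal.toReal_mono (measure_ne_top _ _) (h a b hab)
        linarith
      right_continuous' := by
        intro x
        rw [← continuousWithinAt_Ioi_iff_Ici]
        exact ((ENNReal.tendsto_toReal (measure_ne_top _ _)).comp
          (tendsto_measure_Iic_right β x)).sub ((ENNReal.tendsto_toReal (measure_ne_top _ _)).comp
          (tendsto_measure_Iic_right α x)) }
  have hlim : ∀ (γ : Measure ℝ) [IsFiniteMeasure γ],
      Tendsto (fun x => (γ (Iic x)).toReal) atBot (𝓝 0) := fun γ _ => by
    have := (ENNReal.tendsto_toReal ENNReal.zero_ne_top).comp (tendsto_measure_Iic_bot γ)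
    simpa [Function.comp_def] using this
  have hFlim : Tendsto F atBot (𝓝 0) := by
    have := (hlim β).sub (hlim α)
    rw [sub_zero] at this
    exact this
  have hF0 : ∀ x, 0 ≤ F x := fun x => F.mono.le_of_tendsto hFlim x
  have key : β = α + F.measure := by
    refine Measure.ext_of_Iic _ _ fun x => ?_
    rw [Measure.add_apply, F.measure_Iic hFlim, sub_zero,
      ← ENNReal.ofReal_toReal (measure_ne_top α (Iic x)),
      ← ENNReal.ofReal_add ENNReal.toReal_nonneg (hF0 x),
      ← ENNReal.ofReal_toReal (measure_ne_top β (Iic x))]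
    congr 1
    change _ = _ + ((β (Iic x)).toReal - (α (Iic x)).toReal)
    ring
  rw [key]
  exact Measure.le_add_right le_rfl

open Filter Topology in
/-- An increasing family `θ x ≤ ν` with `θ x` of mass `μ (-∞, x]`, hence right-continuous, is the
family of measures `P ((-∞, x] × ·)` for some `P`. On `ν ⊗ Lebesgue (0, 1)` let
`X (y, u) = inf {q ∈ ℚ | u < (dθ q / dν) y}`; then `P` is the law of `(X (y, u), y)`. -/
lemma exists_joint_law {μ ν : Measure ℝ} [IsFiniteMeasure μ] [IsFiniteMeasure ν]
    {θ : ℝ → Measure ℝ} (hle : ∀ x, θ x ≤ ν)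
    (hinc : ∀ x y, x < y → ∃ κ : Measure ℝ, θ y = θ x + κ ∧ κ univ = μ (Ioc x y))
    (hmass : ∀ x, θ x univ = μ (Iic x)) (htot : μ univ = ν univ) :
    ∃ P : Measure (ℝ × ℝ), IsFiniteMeasure P ∧ P.map Prod.snd = ν ∧
      ∀ x, ∀ A : Set ℝ, MeasurableSet A → P (Iic x ×ˢ A) = θ x A := by
  have hfin : ∀ x, IsFiniteMeasure (θ x) := fun x => isFiniteMeasure_of_le ν (hle x)
  have hmono : ∀ x y, x < y → θ x ≤ θ y := fun x y hxy => by
    obtain ⟨κ, hκ, -⟩ := hinc x y hxy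
    rw [hκ]
    exact Measure.le_add_right le_rfl
  have hup : ∀ x y, x < y → ∀ A, θ y A ≤ θ x A + μ (Ioc x y) := fun x y hxy A => by
    obtain ⟨κ, hκ, hm⟩ := hinc x y hxy
    rw [hκ, Measure.add_apply, ← hm]
    gcongr
    exact subset_univ A
  set lam : Measure ℝ := volume.restrict (Ioo 0 1) with hlam
  have hlam1 : IsProbabilityMeasure lam := ⟨by simp [hlam]⟩
  set γ := ν.prod lam with hR
  set G : ℝ → ℝ → ℝ≥0∞ := fun x => (θ x).rnDeriv ν with hG
  have hGm : ∀ x, Measurable (G x) := fun x => Measure.measurable_rnDeriv _ _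
  have hG1 : ∀ x, ∀ᵐ y ∂ν, G x y ≤ 1 := fun x => Measure.rnDeriv_le_one_of_le (hle x)
  have hac : ∀ x, θ x ≪ ν := fun x => Measure.absolutelyContinuous_of_le (hle x)
  have hGmono : ∀ x y, x < y → ∀ᵐ z ∂ν, G x z ≤ G y z := fun x y hxy => by
    refine ae_le_of_forall_setLIntegral_le_of_sigmaFinite (hGm x) fun s hs _ => ?_
    rw [Measure.setLIntegral_rnDeriv (hac x), Measure.setLIntegral_rnDeriv (hac y)]
    exact hmono x y hxy s
  set E : ℝ → Set (ℝ × ℝ) := fun x => {p | ENNReal.ofReal p.2 < G x p.1} with hE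
  have hEm : ∀ x, MeasurableSet (E x) := fun x =>
    measurableSet_lt (by fun_prop) ((hGm x).comp measurable_fst)
  have hRE : ∀ x, ∀ A, MeasurableSet A → γ (E x ∩ Prod.fst ⁻¹' A) = θ x A := by
    intro x A hA
    rw [hR, Measure.prod_apply ((hEm x).inter (measurable_fst hA)),
      ← Measure.setLIntegral_rnDeriv (hac x), ← lintegral_indicator hA]
    refine lintegral_congr_ae ?_
    filter_upwards [hG1 x] with y hy
    by_cases hyA : y ∈ A
    · rw [indicator_of_mem hyA, hlam, Measure.restrict_apply' measurableSet_Ioo]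
      have hne : G x y ≠ ∞ := ne_top_of_le_ne_top ENNReal.one_ne_top hy
      have e : (Prod.mk y ⁻¹' (E x ∩ Prod.fst ⁻¹' A)) ∩ Ioo 0 1 = Ioo 0 (G x y).toReal := by
        ext u
        simp only [hE, mem_inter_iff, mem_preimage, mem_ofPred_eq, mem_Ioo, hyA, and_true]
        have h1 : (G x y).toReal ≤ 1 := by
          have := ENNReal.toReal_mono ENNReal.one_ne_top hy
          simpa using this
        constructor
        · rintro ⟨hu, hu0, -⟩
          exact ⟨hu0, (ENNReal.ofReal_lt_iff_lt_toReal hu0.le hne).1 hu⟩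
        · rintro ⟨hu0, hu⟩
          exact ⟨(ENNReal.ofReal_lt_iff_lt_toReal hu0.le hne).2 hu, hu0, by linarith⟩
      rw [e, Real.volume_Ioo, sub_zero, ENNReal.ofReal_toReal hne]
    · rw [indicator_of_notMem hyA]
      have e : Prod.mk y ⁻¹' (E x ∩ Prod.fst ⁻¹' A) = ∅ := by
        ext u
        simp [hyA]
      rw [e, measure_empty]
  classical
  set X : ℝ × ℝ → EReal := fun p => ⨅ q : ℚ, if p ∈ E (q : ℝ) then (((q : ℝ)) : EReal) else ⊤
    with hX
  have hXm : Measurable X :=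
    Measurable.iInf fun q => Measurable.ite (hEm q) measurable_const measurable_const
  have hXlt : ∀ p (x : ℝ), X p < x ↔ ∃ q : ℚ, (q : ℝ) < x ∧ p ∈ E q := by
    intro p x
    simp only [hX, iInf_lt_iff]
    refine exists_congr fun q => ?_
    by_cases hp : p ∈ E q
    · simp [hp]
    · simp [hp]
  have hlow : ∀ x y : ℝ, x < y → ∀ A, MeasurableSet A →
      θ x A ≤ γ ({p | X p < y} ∩ Prod.fst ⁻¹' A) := by
    intro x y hxy A hA
    obtain ⟨q, hxq, hqy⟩ := exists_rat_btwn hxy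
    rw [show θ x A = γ (E x ∩ Prod.fst ⁻¹' A) from (hRE x A hA).symm]
    refine le_trans ?_ (measure_mono (inter_subset_inter_left _
      (fun p hp => (hXlt p y).2 ⟨q, hqy, hp⟩ : E q ⊆ {p | X p < y})))
    rw [hRE x A hA, hRE q A hA]
    exact hmono _ _ hxq A
  have hhigh : ∀ y : ℝ, ∀ A, MeasurableSet A → γ ({p | X p < y} ∩ Prod.fst ⁻¹' A) ≤ θ y A := by
    intro y A hA
    rw [← hRE y A hA]
    refine measure_mono_ae ?_
    have hall : ∀ᵐ p ∂γ, ∀ q : ℚ, (q : ℝ) < y → G q p.1 ≤ G y p.1 := by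
      rw [ae_all_iff]
      intro q
      by_cases hq : (q : ℝ) < y
      · have : ∀ᵐ p ∂γ, G q p.1 ≤ G y p.1 :=
          Measure.quasiMeasurePreserving_fst.ae (hGmono q y hq)
        filter_upwards [this] with p hp _
        exact hp
      · exact Eventually.of_forall fun p h => absurd h hq
    filter_upwards [hall] with p hp hmem
    obtain ⟨q, hq, hpE⟩ := (hXlt p y).1 hmem.1
    exact ⟨lt_of_lt_of_le hpE (hp q hq), hmem.2⟩
  have hRfin : IsFiniteMeasure γ := by rw [hR]; infer_instance
  have hRuniv : γ univ = ν univ := by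
    rw [hR, ← univ_prod_univ, Measure.prod_prod, measure_univ (μ := lam), mul_one]
  -- `X` is almost surely finite
  have hbot : ∀ᵐ p ∂γ, X p ≠ ⊥ := by
    rw [ae_iff]
    refine le_antisymm ?_ zero_le
    refine ge_of_tendsto' (tendsto_measure_Iic_bot μ) fun x => ?_
    rw [← hmass x]
    refine le_trans (measure_mono fun p hp => ?_) (hhigh x univ MeasurableSet.univ)
    simp only [ne_eq, not_not, mem_ofPred_eq] at hp
    refine ⟨?_, mem_univ _⟩
    simp only [mem_ofPred_eq, hp]
    exact EReal.bot_lt_coe x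
  have htop : ∀ᵐ p ∂γ, X p ≠ ⊤ := by
    have hsm : MeasurableSet {p | X p ≠ ⊤} := (hXm (measurableSet_singleton ⊤)).compl
    have h1 : γ {p | X p ≠ ⊤} = γ univ := by
      refine le_antisymm (measure_mono (subset_univ _)) ?_
      rw [hRuniv, ← htot]
      refine le_of_tendsto' (tendsto_measure_Iic_atTop μ) fun x => ?_
      rw [← hmass x]
      refine (hlow x (x + 1) (by linarith) univ MeasurableSet.univ).trans (measure_mono ?_)
      intro p hp
      exact (lt_of_lt_of_le hp.1 le_top).ne
    rw [ae_iff]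
    have h2 := measure_compl hsm (measure_ne_top γ _)
    rw [h1, tsub_self] at h2
    exact h2
  set T : ℝ × ℝ → ℝ × ℝ := fun p => ((X p).toReal, p.1) with hT
  have hTm : Measurable T := (measurable_ereal_toReal.comp hXm).prodMk measurable_fst
  refine ⟨γ.map T, Measure.isFiniteMeasure_map γ T, ?_, ?_⟩
  · rw [Measure.map_map measurable_snd hTm]
    have : Prod.snd ∘ T = Prod.fst := rfl
    rw [this, hR, Measure.map_fst_prod, measure_univ, one_smul]
  · intro x A hA
    have hPlt : ∀ y : ℝ, γ.map T (Iio y ×ˢ A) = γ ({p | X p < y} ∩ Prod.fst ⁻¹' A) := by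
      intro y
      rw [Measure.map_apply hTm (measurableSet_Iio.prod hA)]
      refine measure_congr ?_
      filter_upwards [hbot, htop] with p h1 h2
      refine propext ?_
      change (X p).toReal < y ∧ p.1 ∈ A ↔ X p < y ∧ p.1 ∈ A
      rw [← EReal.coe_lt_coe_iff, EReal.coe_toReal h2 h1]
    have hfin' := Measure.isFiniteMeasure_map γ T
    have hl1 := tendsto_measure_biInter_gt (μ := γ.map T) (s := fun y => Iio y ×ˢ A) (a := x)
      (fun r _ => (measurableSet_Iio.prod hA).nullMeasurableSet)
      (fun i j _ hij => prod_mono_left (Iio_subset_Iio hij)) ⟨x + 1, by simp, measure_ne_top _ _⟩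
    have e : (⋂ r, ⋂ (_ : r > x), Iio r ×ˢ A) = Iic x ×ˢ A := by
      ext z
      simp only [mem_iInter, mem_prod, mem_Iio, mem_Iic]
      constructor
      · intro hz
        exact ⟨le_of_forall_gt_imp_ge_of_dense fun r hr => (hz r hr).1.le,
          (hz (x + 1) (by simp)).2⟩
      · exact fun hz r hr => ⟨lt_of_le_of_lt hz.1 hr, hz.2⟩
    rw [e] at hl1
    have hz : Tendsto (fun y => μ (Ioc x y)) (𝓝[>] x) (𝓝 0) := by
      have := tendsto_measure_biInter_gt (μ := μ) (s := fun y => Ioc x y) (a := x)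
        (fun r _ => measurableSet_Ioc.nullMeasurableSet)
        (fun i j _ hij => Ioc_subset_Ioc_right hij) ⟨x + 1, by simp, measure_ne_top _ _⟩
      have e : (⋂ r, ⋂ (_ : r > x), Ioc x r) = ∅ := by
        ext z
        simp only [mem_iInter, mem_Ioc, mem_empty_iff_false, iff_false]
        intro hz
        have h1 := (hz (x + 1) (by simp)).1
        have h2 : z ≤ x := le_of_forall_gt_imp_ge_of_dense fun r hr => (hz r hr).2
        linarith
      rw [e, measure_empty] at this
      exact this
    have hl2 : Tendsto ((γ.map T) ∘ fun y => Iio y ×ˢ A) (𝓝[>] x) (𝓝 (θ x A)) := by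
      have hu : Tendsto (fun y => θ x A + μ (Ioc x y)) (𝓝[>] x) (𝓝 (θ x A)) := by
        simpa using tendsto_const_nhds.add hz
      refine tendsto_of_tendsto_of_tendsto_of_le_of_le' tendsto_const_nhds hu ?_ ?_
      · filter_upwards [self_mem_nhdsWithin] with y hy
        simp only [Function.comp_apply, hPlt]
        exact hlow x y hy A hA
      · filter_upwards [self_mem_nhdsWithin] with y hy
        simp only [Function.comp_apply, hPlt]
        exact (hhigh y A hA).trans (hup x y hy A)
    exact tendsto_nhds_unique hl1 hl2

/-! ### Uniqueness and the supermartingale property -/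

/-- Rectangles `(-∞, x] × A` determine a finite measure on the plane. -/
lemma eq_of_Iic_prod_eq {P Q : Measure (ℝ × ℝ)} [IsFiniteMeasure P] [IsFiniteMeasure Q]
    (h : ∀ x, ∀ A : Set ℝ, MeasurableSet A → Q (Iic x ×ˢ A) = P (Iic x ×ˢ A)) : Q = P := by
  refine Measure.ext_prod fun {s t} hs ht => ?_
  have hslice : ∀ (M : Measure (ℝ × ℝ)) (B : Set ℝ), MeasurableSet B →
      (M.restrict (univ ×ˢ t)).map Prod.fst B = M (B ×ˢ t) := by
    intro M B hB
    rw [Measure.map_apply measurable_fst hB, Measure.restrict_apply (measurable_fst hB)]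
    congr 1
    ext z
    simp
  have key : (Q.restrict (univ ×ˢ t)).map Prod.fst = (P.restrict (univ ×ˢ t)).map Prod.fst := by
    have := Measure.isFiniteMeasure_map (Q.restrict (univ ×ˢ t)) Prod.fst
    refine Measure.ext_of_Iic _ _ fun x => ?_
    rw [hslice _ _ measurableSet_Iic, hslice _ _ measurableSet_Iic, h x t ht]
  rw [← hslice Q s hs, ← hslice P s hs, key]

/-- If every strip `(a, b] × ℝ` is transported from its first marginal to a measure dominating it in
convex-decreasing order, then the barycenter inequality on strips extends to all Borel sets. -/
lemma supermartingale_of_strips {P : Measure (ℝ × ℝ)} {μ ν : Measure ℝ}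
    (hμ : FiniteFirstMoment μ) (hν : FiniteFirstMoment ν)
    (hfst : P.map Prod.fst = μ) (hsnd : P.map Prod.snd = ν) [IsFiniteMeasure P]
    (h : ∀ a b : ℝ, a < b → CDOrder (μ.restrict (Ioc a b))
      ((P.restrict (Ioc a b ×ˢ univ)).map Prod.snd)) : SupermartingaleProperty P := by
  have i1 : Integrable (fun p : ℝ × ℝ => p.1) P := by
    have := hμ.2
    rw [← hfst] at this
    exact this.comp_measurable measurable_fst
  have i2 : Integrable (fun p : ℝ × ℝ => p.2) P := by
    have := hν.2
    rw [← hsnd] at this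
    exact this.comp_measurable measurable_snd
  set f : ℝ × ℝ → ℝ := fun p => p.2 - p.1 with hf
  have hfi : Integrable f P := i2.sub i1
  have hfm : Measurable f := by fun_prop
  have hstrip : ∀ A : Set ℝ, MeasurableSet A → MeasurableSet (A ×ˢ (univ : Set ℝ)) :=
    fun A hA => hA.prod MeasurableSet.univ
  have hIoc : ∀ a b, a < b → ∫ p in Ioc a b ×ˢ univ, f p ∂P ≤ 0 := by
    intro a b hab
    have hlin : LinearGrowth fun x : ℝ => -x := ⟨1, fun x => by rw [abs_neg]; linarith⟩
    have hconv : ConvexOn ℝ univ fun x : ℝ => -x := by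
      have := affine_convex (-1) 0
      simpa using this
    have hcd := h a b hab (fun x => -x) hconv (fun x y hxy => neg_le_neg hxy) hlin
    have e1 : μ.restrict (Ioc a b) = (P.restrict (Ioc a b ×ˢ univ)).map Prod.fst := by
      rw [← hfst, Measure.restrict_map measurable_fst measurableSet_Ioc, prod_univ]
    rw [e1, integral_neg, integral_neg, integral_map measurable_fst.aemeasurable (by fun_prop),
      integral_map measurable_snd.aemeasurable (by fun_prop)] at hcd
    rw [hf, integral_sub i2.integrableOn i1.integrableOn]
    linarith
  -- the positive and negative parts of the drift, as measures on the first coordinate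
  set α := (P.withDensity fun p => ENNReal.ofReal (f p)).map Prod.fst with hα
  set β := (P.withDensity fun p => ENNReal.ofReal (-f p)).map Prod.fst with hβ
  have hαA : ∀ A, MeasurableSet A → α A = ∫⁻ p in A ×ˢ univ, ENNReal.ofReal (f p) ∂P := by
    intro A hA
    rw [hα, Measure.map_apply measurable_fst hA, withDensity_apply _ (measurable_fst hA), prod_univ]
  have hβA : ∀ A, MeasurableSet A → β A = ∫⁻ p in A ×ˢ univ, ENNReal.ofReal (-f p) ∂P := by
    intro A hA
    rw [hβ, Measure.map_apply measurable_fst hA, withDensity_apply _ (measurable_fst hA), prod_univ]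
  have hαf : IsFiniteMeasure α := by
    have := isFiniteMeasure_withDensity_ofReal hfi.2
    exact Measure.isFiniteMeasure_map _ _
  have hβf : IsFiniteMeasure β := by
    have := isFiniteMeasure_withDensity_ofReal (f := fun p => -f p) hfi.neg.2
    exact Measure.isFiniteMeasure_map _ _
  have hdrift : ∀ A, MeasurableSet A →
      ∫ p in A ×ˢ univ, f p ∂P = (α A).toReal - (β A).toReal := by
    intro A hA
    rw [hαA A hA, hβA A hA, integral_eq_lintegral_pos_part_sub_lintegral_neg_part hfi.integrableOn]
  have hle : α ≤ β := by
    refine measure_le_of_Ioc_le fun a b hab => ?_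
    have h1 := hIoc a b hab
    rw [hdrift _ measurableSet_Ioc] at h1
    exact (ENNReal.toReal_le_toReal (measure_ne_top _ _) (measure_ne_top _ _)).1 (by linarith)
  intro A hA
  have h1 := hdrift A hA
  have h2 := ENNReal.toReal_mono (measure_ne_top β A) (hle A)
  rw [hf, integral_sub i2.integrableOn i1.integrableOn] at h1
  linarith

/-- Increasing Supermartingale Transport, Theorem 5.8(i).
Given `μ ≤_cd ν`, every `μ|_{(-∞,x]}` is `≤_pcd ν`; there is a unique measure `P` on `ℝ²`
with first marginal `μ` transporting `μ|_{(-∞,x]}` to its shadow in `ν` for every `x`,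
and this `P` is a supermartingale coupling of `μ` and `ν`. -/
theorem increasing_supermartingale_transport
    (μ ν : Measure ℝ) (hμ : FiniteFirstMoment μ) (hν : FiniteFirstMoment ν)
    (h : CDOrder μ ν) :
    (∀ x : ℝ, PCDOrder (μ.restrict (Set.Iic x)) ν) ∧
    ∃ θ : ℝ → Measure ℝ,
      (∀ x : ℝ, IsShadow (μ.restrict (Set.Iic x)) ν (θ x)) ∧
      ∃ P : Measure (ℝ × ℝ),
        (IsFiniteMeasure P ∧ P.map Prod.fst = μ ∧
          ∀ x : ℝ, ∀ A : Set ℝ, MeasurableSet A → P (Set.Iic x ×ˢ A) = θ x A) ∧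
        IsSupermartingaleCoupling P μ ν ∧
        ∀ Q : Measure (ℝ × ℝ),
          (IsFiniteMeasure Q ∧ Q.map Prod.fst = μ ∧
            ∀ x : ℝ, ∀ A : Set ℝ, MeasurableSet A → Q (Set.Iic x ×ˢ A) = θ x A) →
          Q = P := by
  have fμ := hμ.1
  have fν := hν.1
  have hmass := mass_eq_of_cdOrder h
  refine ⟨fun x φ hc ha hpos hg => ?_, ?_⟩
  · have hm : Measurable φ := ha.measurable
    exact (integral_mono_measure Measure.restrict_le_self (Filter.Eventually.of_forall hpos)
      (hμ.integrable_of_linearGrowth hm hg)).trans (h φ hc ha hg)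
  have hput : ∀ s t, put (μ.restrict s) t ≤ put ν t := fun s t =>
    (put_mono_measure hμ Measure.restrict_le_self t).trans (put_le_of_cdOrder h t)
  have hsh : ∀ x : ℝ, ∃ θ ρ : Measure ℝ, FiniteFirstMoment ρ ∧ ν = θ + ρ ∧
      (∀ t, put ρ t = hull (fun s => put ν s - put (μ.restrict (Iic x)) s) t) ∧
      IsShadow (μ.restrict (Iic x)) ν θ := fun x =>
    exists_shadow (hμ.restrict _) hν (hput _) <| by
      refine ENNReal.toReal_mono (measure_ne_top _ _) ?_
      rw [← hmass]
      exact Measure.restrict_le_self _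
  choose θ ρ hρ hadd hpρ hθ using hsh
  have hinc : ∀ x y, x < y → ∃ κ : Measure ℝ, FiniteFirstMoment κ ∧ θ y = θ x + κ ∧
      CDOrder (μ.restrict (Ioc x y)) κ := by
    intro x y hxy
    have e : μ.restrict (Iic y) = μ.restrict (Iic x) + μ.restrict (Ioc x y) := by
      rw [← Measure.restrict_union _ measurableSet_Ioc, Iic_union_Ioc_eq_Iic hxy.le]
      exact Set.disjoint_left.2 fun z hz hz' => absurd hz'.1 (not_lt.2 hz)
    have hpy := hpρ y
    have hθy := hθ y
    have hputy := hput (Iic y)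
    rw [e] at hθy hputy
    simp only [e] at hpy
    exact shadow_increment (hμ.restrict _) (hμ.restrict _) hν hputy (hρ x) (hρ y) (hadd x) (hadd y)
      (hpρ x) hpy (hθ x) hθy
  have hmassθ : ∀ x, θ x univ = μ (Iic x) := fun x => by
    have := (hθ x).1.1
    rw [← mass_eq_of_cdOrder (hθ x).2.1, Measure.restrict_apply_univ]
  refine ⟨θ, hθ, ?_⟩
  obtain ⟨P, hP, hsnd, hPθ⟩ := exists_joint_law (μ := μ) (fun x => (hθ x).2.2.1)
    (fun x y hxy => by
      obtain ⟨κ, hκ, hκθ, hκc⟩ := hinc x y hxy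
      have := hκ.1
      exact ⟨κ, hκθ, by rw [← mass_eq_of_cdOrder hκc, Measure.restrict_apply_univ]⟩) hmassθ hmass
  have hfst : P.map Prod.fst = μ := by
    refine (Measure.ext_of_Iic _ _ fun x => ?_).symm
    rw [Measure.map_apply measurable_fst measurableSet_Iic, ← prod_univ,
      hPθ x univ MeasurableSet.univ, hmassθ]
  refine ⟨P, ⟨hP, hfst, hPθ⟩, ⟨⟨hfst, hsnd⟩, ?_⟩, ?_⟩
  · refine supermartingale_of_strips hμ hν hfst hsnd fun a b hab => ?_
    obtain ⟨κ, hκ, hκθ, hκc⟩ := hinc a b hab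
    have e : (P.restrict (Ioc a b ×ˢ univ)).map Prod.snd = κ := by
      ext A hA
      have e1 : Prod.snd ⁻¹' A ∩ Ioc a b ×ˢ univ = Ioc a b ×ˢ A := by
        ext z
        simp [and_comm]
      rw [Measure.map_apply measurable_snd hA, Measure.restrict_apply (measurable_snd hA), e1]
      have hdisj : Disjoint (Iic a ×ˢ A) (Ioc a b ×ˢ A) :=
        Set.disjoint_left.2 fun z hz hz' => absurd hz'.1.1 (not_lt.2 hz.1)
      have h1 := measure_union (μ := P) hdisj (measurableSet_Ioc.prod hA)
      rw [← union_prod, Iic_union_Ioc_eq_Iic hab.le, hPθ b A hA, hPθ a A hA, hκθ,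
        Measure.add_apply] at h1
      have := (hθ a).1.1
      exact ((ENNReal.add_right_inj (measure_ne_top (θ a) A)).1 h1).symm
    rw [e]
    exact hκc
  · rintro Q ⟨hQ, -, hQθ⟩
    exact eq_of_Iic_prod_eq fun x A hA => by rw [hQθ x A hA, hPθ x A hA]
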